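/- Let ℒ be a finite nonempty set and M ≥ 1. Let Z be a random variable with values in ℤ_M, let U^M be uniformly distributed on ℤ_M, and let U^L be uniformly distributed on ℒ, with Z, U^M, U^L mutually independent. Define X = (U^L, Z ⊖ U^M) and Y = (U^L, U^M). Then I(X;Y) = log₂|ℒ| + log₂ M − H(Z). -/

import Mathlib

open Finset Filter Real
open scoped BigOperators

noncomputable section

/-- `p` is a probability mass function on a finite type. -/
def IsPMF {α : Type*} [Fintype α] (p : α → ℝ) : Prop :=
  (∀ a, 0 ≤ p a) ∧ ∑ a, p a = 1

open scoped Classical in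
/-- The distribution (pushforward pmf) of a random variable `X`
defined on a finite sample space carrying the pmf `p`. -/
def distOf {Ω α : Type*} [Fintype Ω] (p : Ω → ℝ) (X : Ω → α) (x : α) : ℝ :=
  ∑ ω ∈ Finset.univ.filter fun ω => X ω = x, p ω

/-- Base-2 Shannon entropy of a pmf on a finite type
(the convention `0 · log₂ 0 = 0` holds since `Real.logb 2 0 = 0`). -/
def ent {α : Type*} [Fintype α] (q : α → ℝ) : ℝ :=
  -∑ x, q x * Real.logb 2 (q x)

/-- Base-2 entropy `H(X)` of a random variable `X` under pmf `p`. -/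
def entRV {Ω α : Type*} [Fintype Ω] [Fintype α] (p : Ω → ℝ) (X : Ω → α) : ℝ :=
  ent (distOf p X)

/-- Base-2 conditional entropy `H(X|Y) = H(X,Y) − H(Y)`. -/
def condEnt {Ω α β : Type*} [Fintype Ω] [Fintype α] [Fintype β]
    (p : Ω → ℝ) (X : Ω → α) (Y : Ω → β) : ℝ :=
  entRV p (fun ω => (X ω, Y ω)) - entRV p Y

/-- Base-2 mutual information `I(X;Y) = H(X) + H(Y) − H(X,Y)`. -/
def MI {Ω α β : Type*} [Fintype Ω] [Fintype α] [Fintype β]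
    (p : Ω → ℝ) (X : Ω → α) (Y : Ω → β) : ℝ :=
  entRV p X + entRV p Y - entRV p (fun ω => (X ω, Y ω))

/-- `X` and `Y` are independent random variables under the pmf `p`. -/
def IndepRV {Ω α β : Type*} [Fintype Ω] (p : Ω → ℝ) (X : Ω → α) (Y : Ω → β) : Prop :=
  ∀ a b, distOf p (fun ω => (X ω, Y ω)) (a, b) = distOf p X a * distOf p Y b

/-!
The law of the triple `(Z, Uᴹ, Uᴸ)` carries all the information in `(X, Y)`, since `Z` is recovered
as `(Z ⊖ Uᴹ) + Uᴹ`; hence `H(X, Y) = H(Z) + H(Uᴹ) + H(Uᴸ)`. Both `H(X) = H(Uᴸ) + H(Z ⊖ Uᴹ)` and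
`H(Y) = H(Uᴸ) + H(Uᴹ)` split by independence, so `I(X; Y) = H(Uᴸ) + H(Z ⊖ Uᴹ) - H(Z)` whatever the
distributions are. A uniform pad `Uᴹ` makes `Z ⊖ Uᴹ` uniform as well.
-/

section Distribution

variable {Ω α β γ δ : Type*} [Fintype Ω] {p : Ω → ℝ}

theorem distOf_congr {X : Ω → α} {Y : Ω → β} {x : α} {y : β} (h : ∀ ω, X ω = x ↔ Y ω = y) :
    distOf p X x = distOf p Y y := by
  classical
  exact sum_congr (filter_congr fun ω _ => h ω) fun _ _ => rfl

theorem distOf_eq_zero {X : Ω → α} {x : α} (h : ∀ ω, X ω ≠ x) : distOf p X x = 0 := by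
  simp [distOf, h]

theorem distOf_comp [Fintype α] (p : Ω → ℝ) (X : Ω → α) (f : α → β) :
    distOf p (fun ω => f (X ω)) = distOf (distOf p X) f := by
  classical
  ext b
  calc distOf p (fun ω => f (X ω)) b
      = ∑ ω, ∑ a, if X ω = a ∧ f a = b then p ω else 0 := by
        simp [distOf, sum_filter, ite_and]
    _ = distOf (distOf p X) f b := by
        rw [sum_comm]
        simp only [distOf, sum_filter, ite_sum_zero, ← ite_and, and_comm]

theorem sum_distOf_prodMk [Fintype β] (p : Ω → ℝ) (X : Ω → α) (Y : Ω → β) (a : α) :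
    ∑ b, distOf p (fun ω => (X ω, Y ω)) (a, b) = distOf p X a := by
  classical
  simp only [distOf, sum_filter, Prod.mk.injEq, ite_and]
  rw [sum_comm]
  exact sum_congr rfl fun ω _ => by split_ifs <;> simp

theorem distOf_prodMap [Fintype α] [Fintype β] (q : α → ℝ) (r : β → ℝ) (f : α → γ) (g : β → δ)
    (c : γ) (d : δ) :
    distOf (fun x : α × β => q x.1 * r x.2) (Prod.map f g) (c, d) =
      distOf q f c * distOf r g d := by
  classical
  simp only [distOf, sum_mul_sum, ← sum_product']
  refine sum_congr ?_ fun _ _ => rfl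
  ext ⟨a, b⟩
  simp

theorem isPMF_distOf [Fintype α] (hp : IsPMF p) (X : Ω → α) : IsPMF (distOf p X) := by
  classical
  refine ⟨fun x => sum_nonneg fun ω _ => hp.1 ω, ?_⟩
  simp only [distOf, sum_filter]
  rw [sum_comm, ← hp.2]
  simp

end Distribution

section Independence

variable {Ω α β γ δ : Type*} [Fintype Ω] {p : Ω → ℝ}

theorem IndepRV.distOf_prodMk {X : Ω → α} {Y : Ω → β} (h : IndepRV p X Y) :
    distOf p (fun ω => (X ω, Y ω)) = fun x => distOf p X x.1 * distOf p Y x.2 :=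
  funext fun x => h x.1 x.2

theorem IndepRV.symm {X : Ω → α} {Y : Ω → β} (h : IndepRV p X Y) : IndepRV p Y X := fun b a => by
  rw [mul_comm, ← h a b]
  exact distOf_congr fun ω => by simp only [Prod.mk.injEq, and_comm]

theorem IndepRV.comp [Finite α] [Finite β] {X : Ω → α} {Y : Ω → β} (h : IndepRV p X Y)
    (f : α → γ) (g : β → δ) : IndepRV p (fun ω => f (X ω)) (fun ω => g (Y ω)) := by
  cases nonempty_fintype α
  cases nonempty_fintype β
  intro c d
  calc distOf p (fun ω => (f (X ω), g (Y ω))) (c, d)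
      = distOf (distOf p fun ω => (X ω, Y ω)) (Prod.map f g) (c, d) :=
        congrFun (distOf_comp p (fun ω => (X ω, Y ω)) (Prod.map f g)) (c, d)
    _ = distOf p (fun ω => f (X ω)) c * distOf p (fun ω => g (Y ω)) d := by
        rw [h.distOf_prodMk, distOf_prodMap, distOf_comp p X, distOf_comp p Y]

/-- Mutual independence of three random variables under `p`, as factorization of their joint
distribution; for a pmf this implies the factorization of every pair. -/
def MutualIndepRV (p : Ω → ℝ) (X : Ω → α) (Y : Ω → β) (W : Ω → γ) : Prop :=
  ∀ a b c, distOf p (fun ω => (X ω, Y ω, W ω)) (a, b, c) =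
    distOf p X a * distOf p Y b * distOf p W c

namespace MutualIndepRV

variable {X : Ω → α} {Y : Ω → β} {W : Ω → γ}

theorem distOf_assoc (h : MutualIndepRV p X Y W) (a : α) (b : β) (c : γ) :
    distOf p (fun ω => ((X ω, Y ω), W ω)) ((a, b), c) =
      distOf p X a * distOf p Y b * distOf p W c := by
  rw [← h]
  exact distOf_congr fun ω => by simp only [Prod.mk.injEq, and_assoc]

theorem indepRV_fst_snd [Finite γ] (h : MutualIndepRV p X Y W) (hp : IsPMF p) : IndepRV p X Y :=
  fun a b => by
    cases nonempty_fintype γ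
    rw [← sum_distOf_prodMk p (fun ω => (X ω, Y ω)) W]
    simp only [h.distOf_assoc]
    rw [← mul_sum, (isPMF_distOf hp W).2, mul_one]

theorem indepRV_prodMk [Finite γ] (h : MutualIndepRV p X Y W) (hp : IsPMF p) :
    IndepRV p (fun ω => (X ω, Y ω)) W := fun ⟨a, b⟩ c => by
  rw [h.distOf_assoc, h.indepRV_fst_snd hp]

end MutualIndepRV

theorem distOf_sub_of_uniform {G : Type*} [AddGroup G] [Fintype G] {Z U : Ω → G} (hp : IsPMF p)
    (hU : ∀ u, distOf p U u = 1 / (Fintype.card G : ℝ)) (h : IndepRV p Z U) (s : G) :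
    distOf p (fun ω => Z ω - U ω) s = 1 / (Fintype.card G : ℝ) := by
  have joint (z : G) : distOf p (fun ω => (Z ω - U ω, Z ω)) (s, z) =
      distOf p Z z * (1 / (Fintype.card G : ℝ)) := by
    rw [← hU (-s + z), ← h]
    refine distOf_congr fun ω => ?_
    simp only [Prod.mk.injEq, eq_neg_add_iff_add_eq, sub_eq_iff_eq_add]
    grind
  rw [← sum_distOf_prodMk p (fun ω => Z ω - U ω) Z]
  simp only [joint]
  rw [← sum_mul, (isPMF_distOf hp Z).2, one_mul]

end Independence

section Entropy

variable {Ω α β : Type*} [Fintype Ω] [Fintype α] [Fintype β] {p : Ω → ℝ}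

theorem entRV_comp_of_injective (p : Ω → ℝ) (X : Ω → α) {f : α → β} (hf : Function.Injective f) :
    entRV p (fun ω => f (X ω)) = entRV p X := by
  refine congrArg Neg.neg (Fintype.sum_of_injective f hf _ _ (fun b hb => ?_) fun a => ?_).symm
  · rw [distOf_eq_zero fun ω hω => hb ⟨X ω, hω⟩, zero_mul]
  · rw [distOf_congr fun ω => hf.eq_iff]

theorem entRV_of_uniform {X : Ω → α} (hX : ∀ x, distOf p X x = 1 / (Fintype.card α : ℝ)) :
    entRV p X = Real.logb 2 (Fintype.card α) := by
  cases isEmpty_or_nonempty α <;> simp [entRV, ent, hX]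

theorem ent_prod {q : α → ℝ} {r : β → ℝ} (hq : IsPMF q) (hr : IsPMF r) :
    ent (fun x : α × β => q x.1 * r x.2) = ent q + ent r := by
  have mul_logb_mul (a : α) (b : β) : q a * r b * Real.logb 2 (q a * r b) =
      q a * Real.logb 2 (q a) * r b + q a * (r b * Real.logb 2 (r b)) := by
    rcases eq_or_ne (q a) 0 with ha | ha
    · simp [ha]
    rcases eq_or_ne (r b) 0 with hb | hb
    · simp [hb]
    rw [Real.logb_mul ha hb]
    ring
  simp only [ent, Fintype.sum_prod_type, mul_logb_mul, sum_add_distrib, ← mul_sum, ← sum_mul,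
    hq.2, hr.2]
  ring

theorem IndepRV.entRV_prodMk {X : Ω → α} {Y : Ω → β} (h : IndepRV p X Y) (hp : IsPMF p) :
    entRV p (fun ω => (X ω, Y ω)) = entRV p X + entRV p Y := by
  rw [entRV, h.distOf_prodMk, ent_prod (isPMF_distOf hp X) (isPMF_distOf hp Y), entRV, entRV]

end Entropy

theorem statement11_general {Ω L G : Type*} [Fintype Ω] [Fintype L] [Fintype G] [AddGroup G]
    {p : Ω → ℝ} (hp : IsPMF p) {Z UM : Ω → G} {UL : Ω → L} (hind : MutualIndepRV p Z UM UL) :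
    MI p (fun ω => (UL ω, Z ω - UM ω)) (fun ω => (UL ω, UM ω)) =
      entRV p UL + entRV p (fun ω => Z ω - UM ω) - entRV p Z := by
  have indep : IndepRV p UL (fun ω => (Z ω, UM ω)) := (hind.indepRV_prodMk hp).symm
  have entX : entRV p (fun ω => (UL ω, Z ω - UM ω)) =
      entRV p UL + entRV p (fun ω => Z ω - UM ω) :=
    (indep.comp id fun x => x.1 - x.2).entRV_prodMk hp
  have entY : entRV p (fun ω => (UL ω, UM ω)) = entRV p UL + entRV p UM :=
    (indep.comp id Prod.snd).entRV_prodMk hp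
  have inj : Function.Injective fun x : L × G × G => ((x.1, x.2.1 - x.2.2), (x.1, x.2.2)) := by
    rintro ⟨l, z, m⟩ ⟨l', z', m'⟩ h
    simp only [Prod.mk.injEq] at h
    obtain ⟨⟨rfl, hz⟩, -, rfl⟩ := h
    rw [sub_left_injective hz]
  have entXY : entRV p (fun ω => ((UL ω, Z ω - UM ω), (UL ω, UM ω))) =
      entRV p UL + (entRV p Z + entRV p UM) := by
    rw [← (hind.indepRV_fst_snd hp).entRV_prodMk hp, ← indep.entRV_prodMk hp]
    exact entRV_comp_of_injective p (fun ω => (UL ω, Z ω, UM ω)) inj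
  rw [MI, entX, entY, entXY]
  ring

/-- with `Z` on `ℤ_M`, `Uᴹ` uniform on `ℤ_M`, `Uᴸ` uniform
on `ℒ`, the three mutually independent, and shares `X = (Uᴸ, Z ⊖ Uᴹ)`,
`Y = (Uᴸ, Uᴹ)`, one has `I(X;Y) = log₂|ℒ| + log₂ M − H(Z)`. -/
theorem statement11 {Ω L : Type} [Fintype Ω] [Fintype L] [Nonempty L]
    (M : ℕ) [NeZero M] (p : Ω → ℝ) (hp : IsPMF p)
    (Z UM : Ω → ZMod M) (UL : Ω → L)
    (hUM : ∀ u, distOf p UM u = 1 / (M : ℝ))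
    (hUL : ∀ a, distOf p UL a = 1 / (Fintype.card L : ℝ))
    (hind : ∀ z m l, distOf p (fun ω => (Z ω, UM ω, UL ω)) (z, m, l)
      = distOf p Z z * distOf p UM m * distOf p UL l) :
    MI p (fun ω => (UL ω, Z ω - UM ω)) (fun ω => (UL ω, UM ω))
      = Real.logb 2 (Fintype.card L) + Real.logb 2 M - entRV p Z := by
  have hsub := distOf_sub_of_uniform hp (by simpa only [ZMod.card] using hUM)
    (MutualIndepRV.indepRV_fst_snd hind hp)
  rw [statement11_general hp hind, entRV_of_uniform hUL, entRV_of_uniform hsub, ZMod.card]
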